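/- Let n ≥ 1, let v : Fin n → ℂⁿ be an orthonormal basis consisting of eigenvectors of a Hermitian matrix A with real eigenvalues α : Fin n → ℝ (A·v_j = α_j·v_j), let w : Fin n → ℂⁿ be an orthonormal basis, let S ⊆ Fin n, let F := Σ_{l∈S} w_l·w_lᴴ, and let ρ be any n×n complex matrix. With q(j,k,l) := ⟨w_l, v_j⟩·⟨v_j, ρ·v_k⟩·⟨v_k, w_l⟩, the following two identities hold: Tr(F·A·ρ·A) = Σ_{j∈Fin n, k∈Fin n, l∈S} q(j,k,l)·α_j·α_k, and Tr(F·A·ρ) = Σ_{j∈Fin n, k∈Fin n, l∈S} q(j,k,l)·α_j. (Hence the postselected quantum Fisher information can be expressed entirely in terms of the doubly extended Kirkwood–Dirac distribution.) -/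

import Mathlib

open Matrix

/-!
With `P_j = v_j v_jᴴ`, multiplying `A` by the resolution of the identity `∑ P_j = 1` gives
`A = ∑ α_j P_j`. Hence `Tr(F A ρ A)` expands into the terms `α_j α_k Tr(F P_j ρ P_k)`, and cyclicity
of the trace factors `Tr(w_l w_lᴴ P_j ρ P_k)` into the three inner products of `q(j, k, l)`.
For `Tr(F A ρ)` replace the second `A` by the identity matrix, whose eigenvalues are all `1`.
-/

section Biorthogonal

variable {R m ι : Type*} [CommSemiring R] [Fintype m] [Fintype ι]

lemma sum_vecMulVec_eq_one_of_biorthogonal [DecidableEq m] [DecidableEq ι] {u v : ι → m → R}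
    (hcard : Fintype.card ι = Fintype.card m)
    (huv : ∀ j k, u j ⬝ᵥ v k = if j = k then 1 else 0) :
    ∑ j, vecMulVec (v j) (u j) = 1 := by
  have hUV : of u * (of v)ᵀ = 1 := by
    ext j k
    exact (huv j k).trans one_apply.symm
  have hVU : (of v)ᵀ * of u = 1 := (mul_eq_one_comm_of_card_eq _ _ _ hcard).mp hUV
  rw [← hVU]
  ext a b
  simp only [Matrix.sum_apply, vecMulVec_apply, mul_apply, transpose_apply, of_apply]

lemma eq_sum_smul_vecMulVec_of_mulVec_eq_smul [DecidableEq m] {A : Matrix m m R}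
    {u v : ι → m → R} {α : ι → R} (hone : ∑ j, vecMulVec (v j) (u j) = 1)
    (hA : ∀ j, A *ᵥ v j = α j • v j) :
    A = ∑ j, α j • vecMulVec (v j) (u j) :=
  calc
    A = A * ∑ j, vecMulVec (v j) (u j) := by rw [hone, Matrix.mul_one]
    _ = ∑ j, α j • vecMulVec (v j) (u j) := by
      simp only [Matrix.mul_sum, mul_vecMulVec, hA, smul_vecMulVec]

lemma trace_vecMulVec_mul_vecMulVec_mul_mul_vecMulVec (a b c d e f : m → R) (ρ : Matrix m m R) :
    trace (vecMulVec a b * vecMulVec c d * ρ * vecMulVec e f) =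
      (b ⬝ᵥ c) * (d ⬝ᵥ ρ *ᵥ e) * (f ⬝ᵥ a) := by
  rw [vecMulVec_mul_vecMulVec, vecMulVec_mul, vecMulVec_mul_vecMulVec, trace_vecMulVec,
    smul_vecMul, smul_dotProduct, dotProduct_smul, ← dotProduct_mulVec, dotProduct_comm a f,
    smul_eq_mul, smul_eq_mul]

end Biorthogonal

section KirkwoodDirac

variable {R m ι κ : Type*} [CommSemiring R] [StarRing R] [Fintype m]

/-- The doubly extended Kirkwood–Dirac quasiprobability distribution
`q(j, k, l) = ⟨w_l, v_j⟩ ⟨v_j, ρ v_k⟩ ⟨v_k, w_l⟩` of a matrix `ρ` with respect to the families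
`v` and `w`, which need not be orthonormal bases. The inner product `⟨x, y⟩` is encoded as
`star x ⬝ᵥ y`. -/
def extendedKirkwoodDirac (v : ι → m → R) (w : κ → m → R) (ρ : Matrix m m R)
    (j k : ι) (l : κ) : R :=
  (star (w l) ⬝ᵥ v j) * (star (v j) ⬝ᵥ ρ *ᵥ v k) * (star (v k) ⬝ᵥ w l)

lemma trace_sum_vecMulVec_mul_eq_sum_extendedKirkwoodDirac (v : ι → m → R) (w : κ → m → R)
    (S : Finset κ) (ρ : Matrix m m R) (j k : ι) :
    trace ((∑ l ∈ S, vecMulVec (w l) (star (w l))) * vecMulVec (v j) (star (v j)) * ρ *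
        vecMulVec (v k) (star (v k))) =
      ∑ l ∈ S, extendedKirkwoodDirac v w ρ j k l := by
  simp only [Matrix.sum_mul, trace_sum, trace_vecMulVec_mul_vecMulVec_mul_mul_vecMulVec,
    extendedKirkwoodDirac]

variable [Fintype ι] [DecidableEq m] {A B : Matrix m m R} {v : ι → m → R} {α β : ι → R}

lemma trace_mul_mul_mul_eq_sum_extendedKirkwoodDirac
    (hone : ∑ j, vecMulVec (v j) (star (v j)) = 1)
    (hA : ∀ j, A *ᵥ v j = α j • v j) (hB : ∀ k, B *ᵥ v k = β k • v k)
    (w : κ → m → R) (S : Finset κ) (ρ : Matrix m m R) :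
    trace ((∑ l ∈ S, vecMulVec (w l) (star (w l))) * A * ρ * B) =
      ∑ j, ∑ k, ∑ l ∈ S, extendedKirkwoodDirac v w ρ j k l * α j * β k := by
  let F : Matrix m m R := ∑ l ∈ S, vecMulVec (w l) (star (w l))
  let P : ι → Matrix m m R := fun j ↦ vecMulVec (v j) (star (v j))
  have hA_sum : A = ∑ j, α j • P j := eq_sum_smul_vecMulVec_of_mulVec_eq_smul hone hA
  have hB_sum : B = ∑ k, β k • P k := eq_sum_smul_vecMulVec_of_mulVec_eq_smul hone hB
  have hq_sum (j k : ι) :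
      trace (F * P j * ρ * P k) = ∑ l ∈ S, extendedKirkwoodDirac v w ρ j k l :=
    trace_sum_vecMulVec_mul_eq_sum_extendedKirkwoodDirac v w S ρ j k
  calc
    trace (F * A * ρ * B) = ∑ j, ∑ k, trace (F * P j * ρ * P k) * α j * β k := by
      rw [hA_sum, hB_sum]
      simp only [Matrix.sum_mul, Matrix.mul_smul, Matrix.smul_mul, trace_sum, trace_smul,
        smul_eq_mul, Finset.mul_sum]
      rw [Finset.sum_comm]
      exact Finset.sum_congr rfl fun j _ ↦ Finset.sum_congr rfl fun k _ ↦ by ring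
    _ = ∑ j, ∑ k, ∑ l ∈ S, extendedKirkwoodDirac v w ρ j k l * α j * β k := by
      simp only [hq_sum, Finset.sum_mul]

theorem trace_decomposition_kd_general (hone : ∑ j, vecMulVec (v j) (star (v j)) = 1)
    (hA : ∀ j, A *ᵥ v j = α j • v j) (w : κ → m → R) (S : Finset κ) (ρ : Matrix m m R) :
    trace ((∑ l ∈ S, vecMulVec (w l) (star (w l))) * A * ρ * A) =
        ∑ j, ∑ k, ∑ l ∈ S, extendedKirkwoodDirac v w ρ j k l * α j * α k ∧
      trace ((∑ l ∈ S, vecMulVec (w l) (star (w l))) * A * ρ) =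
        ∑ j, ∑ k, ∑ l ∈ S, extendedKirkwoodDirac v w ρ j k l * α j := by
  have hId : ∀ k, (1 : Matrix m m R) *ᵥ v k = (1 : R) • v k := fun k ↦ by
    rw [one_mulVec, one_smul]
  exact ⟨trace_mul_mul_mul_eq_sum_extendedKirkwoodDirac hone hA hA w S ρ, by
    simpa only [Matrix.mul_one, mul_one] using
      trace_mul_mul_mul_eq_sum_extendedKirkwoodDirac hone hA hId w S ρ⟩

end KirkwoodDirac

/-- The traces appearing in the postselected quantum Fisher information decompose in terms of
the doubly extended Kirkwood–Dirac quasiprobability distribution. -/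
theorem trace_decomposition_kd
    {n : ℕ}
    (A : Matrix (Fin n) (Fin n) ℂ) (hA : A.IsHermitian)
    (v : Fin n → (Fin n → ℂ)) (α : Fin n → ℝ)
    (hv_on : ∀ j k, star (v j) ⬝ᵥ v k = if j = k then 1 else 0)
    (hv_eig : ∀ j, A.mulVec (v j) = (α j : ℂ) • v j)
    (w : Fin n → (Fin n → ℂ))
    (hw_on : ∀ j k, star (w j) ⬝ᵥ w k = if j = k then 1 else 0)
    (S : Finset (Fin n))
    (F : Matrix (Fin n) (Fin n) ℂ)
    (hF : F = ∑ l ∈ S, vecMulVec (w l) (star (w l)))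
    (ρ : Matrix (Fin n) (Fin n) ℂ)
    (q : Fin n → Fin n → Fin n → ℂ)
    (hq : ∀ j k l, q j k l
        = (star (w l) ⬝ᵥ v j) * (star (v j) ⬝ᵥ ρ.mulVec (v k)) * (star (v k) ⬝ᵥ w l)) :
    Matrix.trace (F * A * ρ * A)
        = ∑ j : Fin n, ∑ k : Fin n, ∑ l ∈ S, q j k l * (α j : ℂ) * (α k : ℂ) ∧
      Matrix.trace (F * A * ρ)
        = ∑ j : Fin n, ∑ k : Fin n, ∑ l ∈ S, q j k l * (α j : ℂ) := by
  obtain rfl : q = extendedKirkwoodDirac v w ρ := by ext j k l; exact hq j k l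
  subst hF
  exact trace_decomposition_kd_general (sum_vecMulVec_eq_one_of_biorthogonal rfl hv_on) hv_eig w S ρ
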